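/- arXiv:2510.25171 — 2 statements merged into one kernel-verified Lean document; each statement's English description precedes it below -/
import Mathlib

section
/- Let n ≥ 2 and let Ω ⊆ ℝⁿ be an open connected set containing 0. Let ψ̄, φ̄ : ℝⁿ → ℝ be positively 1-homogeneous and C^∞ on ℝⁿ \ {0}, with ψ̄(y) > 0, (φ̄ + ψ̄)(y) ≠ 0 and (φ̄ − ψ̄)(y) ≠ 0 for every y ≠ 0. Suppose Φ₊, Φ₋ : Ω × ℝⁿ → ℝ are C^∞ on Ω × (ℝⁿ \ {0}) and, for each (x,y) ∈ Ω × ℝⁿ, Φ₊(x,y) is the unique t ∈ ℝ with t = (φ̄ + ψ̄)(y + t•x) and Φ₋(x,y) is the unique t ∈ ℝ with t = (φ̄ − ψ̄)(y + t•x). Define F̄ := (Φ₊ − Φ₋)/2 on Ω × (ℝⁿ \ {0}). Then for every y ∈ ℝⁿ \ {0} the following are equivalent: (a) the second Fréchet derivative of ψ̄² at y is positive definite; (b) for every μ ∈ ℝ with μ•y ∈ Ω, the second Fréchet derivative of the function z ↦ F̄(μ•y, z)² at z = y is positive definite. -/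
/-!
Write `P± = φ̄ ± ψ̄`. The second derivative of a positively 1-homogeneous function `f` at `y`
vanishes in the direction `y`, while its first derivative takes the value `f y` there. Hence, if
`0 < f y`, the Hessian of `f ^ 2` at `y` is positive definite iff that of `f` is positive off the
line `ℝ y`. On the ray `x = μ • y`, differentiating `Φ = P (z + Φ • x)` twice at `z = y` gives
`Φ'' = a⁻¹ P'' + μ (P y) Φ''` modulo terms killed by homogeneity, where `a = 1 + μ Φ`; since
`a (1 - μ P y) = 1`, it follows that `Φ'' = P''`. Consequently `F̄ (μ • y, ·)` and `ψ̄` have the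
same second derivative at `y`. The sign `0 < a`, without which homogeneity does not apply, comes
from uniqueness: `P` has constant sign on the connected set `{z | z ≠ 0}`, and `a < 0` would allow a
second solution with `a > 0`.
-/

open Filter Topology

theorem add_smul_smul_self {R M : Type*} [CommRing R] [AddCommGroup M] [Module R M] (y : M)
    (μ t : R) : y + t • μ • y = (1 + μ * t) • y := by
  module

theorem mul_pos_of_continuousOn_of_ne_zero {X : Type*} [TopologicalSpace X] {s : Set X}
    (hs : IsPreconnected s) {f : X → ℝ} (hf : ContinuousOn f s) (hne : ∀ z ∈ s, f z ≠ 0)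
    {a b : X} (ha : a ∈ s) (hb : b ∈ s) : 0 < f a * f b := by
  have hzero : (0 : ℝ) ∉ f '' s := fun ⟨z, hz, hz0⟩ ↦ hne z hz hz0
  rcases (hne a ha).lt_or_gt with ha0 | ha0 <;> rcases (hne b hb).lt_or_gt with hb0 | hb0
  · exact mul_pos_of_neg_of_neg ha0 hb0
  · exact (hzero (hs.intermediate_value ha hb hf ⟨ha0.le, hb0.le⟩)).elim
  · exact (hzero (hs.intermediate_value hb ha hf ⟨hb0.le, ha0.le⟩)).elim
  · exact mul_pos ha0 hb0

section Calculus

variable {𝕜 E F : Type*} [NontriviallyNormedField 𝕜] [NormedAddCommGroup E] [NormedSpace 𝕜 E]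
  [NormedAddCommGroup F] [NormedSpace 𝕜 F]

theorem contDiffOn_of_contDiffOn_prod {G : Type*} [NormedAddCommGroup G]
    [NormedSpace 𝕜 G] {k : WithTop ℕ∞} {f : E → F → G} {s : Set E}
    {t : Set F} (hf : ContDiffOn 𝕜 k (fun p : E × F ↦ f p.1 p.2) (s ×ˢ t)) {x : E} (hx : x ∈ s) :
    ContDiffOn 𝕜 k (f x) t :=
  hf.comp (contDiff_prodMk_right x).contDiffOn fun _ hz ↦ Set.mk_mem_prod hx hz

theorem differentiableAt_fderiv_of_contDiffAt_two {f : E → F} {y : E}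
    (hf : ContDiffAt 𝕜 2 f y) : DifferentiableAt 𝕜 (fderiv 𝕜 f) y :=
  (hf.fderiv_right (m := 1) le_rfl).differentiableAt one_ne_zero

theorem eventually_differentiableAt_of_contDiffAt_two {f : E → F} {y : E}
    (hf : ContDiffAt 𝕜 2 f y) : ∀ᶠ z in 𝓝 y, DifferentiableAt 𝕜 f z :=
  (hf.eventually (by simp)).mono fun _ hz ↦ hz.differentiableAt two_ne_zero

theorem fderiv_fderiv_sq_apply_self {f : E → 𝕜} {y : E} (hf : ContDiffAt 𝕜 2 f y) (θ : E) :
    fderiv 𝕜 (fderiv 𝕜 fun z ↦ f z ^ 2) y θ θ =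
      2 * fderiv 𝕜 f y θ ^ 2 + 2 * f y * fderiv 𝕜 (fderiv 𝕜 f) y θ θ := by
  have hfirst : fderiv 𝕜 (fun z ↦ f z ^ 2) =ᶠ[𝓝 y] fun z ↦ (2 * f z) • fderiv 𝕜 f z := by
    filter_upwards [eventually_differentiableAt_of_contDiffAt_two hf] with z hz
    simp [fderiv_fun_pow 2 hz]
  have hsecond := ((hf.differentiableAt two_ne_zero).hasFDerivAt.const_mul 2).fun_smul
    (differentiableAt_fderiv_of_contDiffAt_two hf).hasFDerivAt
  rw [hfirst.fderiv_eq, hsecond.fderiv]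
  simp only [add_apply, smul_apply, ContinuousLinearMap.smulRight_apply, smul_eq_mul]
  ring

theorem fderiv_fderiv_half_sub {f g : E → 𝕜} {y : E} (hf : ContDiffAt 𝕜 2 f y)
    (hg : ContDiffAt 𝕜 2 g y) :
    fderiv 𝕜 (fderiv 𝕜 fun z ↦ (f z - g z) / 2) y =
      (2⁻¹ : 𝕜) • (fderiv 𝕜 (fderiv 𝕜 f) y - fderiv 𝕜 (fderiv 𝕜 g) y) := by
  have hfirst : fderiv 𝕜 (fun z ↦ (f z - g z) / 2) =ᶠ[𝓝 y]
      fun z ↦ (2⁻¹ : 𝕜) • (fderiv 𝕜 f z - fderiv 𝕜 g z) := by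
    filter_upwards [eventually_differentiableAt_of_contDiffAt_two hf,
      eventually_differentiableAt_of_contDiffAt_two hg] with z hfz hgz
    simp only [div_eq_mul_inv]
    exact ((hfz.hasFDerivAt.sub hgz.hasFDerivAt).mul_const 2⁻¹).fderiv
  rw [hfirst.fderiv_eq]
  exact (((differentiableAt_fderiv_of_contDiffAt_two hf).hasFDerivAt.sub
    (differentiableAt_fderiv_of_contDiffAt_two hg).hasFDerivAt).const_smul (2⁻¹ : 𝕜)).fderiv

theorem fderiv_fderiv_apply_of_eventuallyEq_comp_add_smul {P u : E → 𝕜} {x y : E}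
    (hP : ContDiffAt 𝕜 2 P (y + u y • x)) (hu : ContDiffAt 𝕜 2 u y)
    (heq : ∀ᶠ z in 𝓝 y, u z = P (z + u z • x)) (v w : E) :
    fderiv 𝕜 (fderiv 𝕜 u) y v w =
      fderiv 𝕜 (fderiv 𝕜 P) (y + u y • x) (v + fderiv 𝕜 u y v • x) (w + fderiv 𝕜 u y w • x) +
        fderiv 𝕜 (fderiv 𝕜 u) y v w * fderiv 𝕜 P (y + u y • x) x := by
  have hshift : ∀ z, DifferentiableAt 𝕜 u z →
      HasFDerivAt (fun z ↦ z + u z • x)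
        (ContinuousLinearMap.id 𝕜 E + (fderiv 𝕜 u z).smulRight x) z :=
    fun z hz ↦ (hasFDerivAt_id z).add (hz.hasFDerivAt.smul_const x)
  have hu_diff := hu.differentiableAt two_ne_zero
  have hu2 := (differentiableAt_fderiv_of_contDiffAt_two hu).hasFDerivAt
  have hP_diff : ∀ᶠ z in 𝓝 y, DifferentiableAt 𝕜 P (z + u z • x) :=
    (hshift y hu_diff).continuousAt.eventually (eventually_differentiableAt_of_contDiffAt_two hP)
  have hfirst : (fun z ↦ fderiv 𝕜 u z w) =ᶠ[𝓝 y]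
      fun z ↦ fderiv 𝕜 P (z + u z • x) (w + fderiv 𝕜 u z w • x) := by
    filter_upwards [heq.eventually_nhds, hP_diff,
      eventually_differentiableAt_of_contDiffAt_two hu] with z hz hPz huz
    have hcomp := (hPz.hasFDerivAt.comp z (hshift z huz)).congr_of_eventuallyEq hz
    simpa using DFunLike.congr_fun hcomp.fderiv w
  have hleft := hu2.clm_apply (hasFDerivAt_const w y)
  have hright := ((differentiableAt_fderiv_of_contDiffAt_two hP).hasFDerivAt.comp y
    (hshift y hu_diff)).clm_apply ((hleft.smul_const x).const_add w)
  have hunique := hleft.unique (hright.congr_of_eventuallyEq hfirst)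
  have happly := DFunLike.congr_fun hunique v
  simp only [add_apply, ContinuousLinearMap.comp_apply, ContinuousLinearMap.flip_apply,
    ContinuousLinearMap.smulRight_apply, ContinuousLinearMap.id_apply, zero_apply, map_zero,
    zero_add, map_smul, smul_eq_mul, Function.comp_apply] at happly
  rw [add_comm]
  exact happly

end Calculus

/-- The Hessian of `f` at `y`, read as the second Fréchet derivative, is positive definite. -/
def HessianPosDef {E : Type*} [NormedAddCommGroup E] [NormedSpace ℝ E] (f : E → ℝ) (y : E) : Prop :=
  ∀ θ : E, θ ≠ 0 → 0 < iteratedFDeriv ℝ 2 f y ![θ, θ]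

/-- Positive 1-homogeneity, the defining scaling behaviour of a Minkowski norm; `f` need not be
even, nor positive. -/
def IsPosHomogeneous {E : Type*} [AddCommGroup E] [Module ℝ E] (f : E → ℝ) : Prop :=
  ∀ α : ℝ, 0 < α → ∀ y, f (α • y) = α * f y

namespace IsPosHomogeneous

section Algebra

variable {E : Type*} [AddCommGroup E] [Module ℝ E] {f g : E → ℝ}

theorem map_zero (hf : IsPosHomogeneous f) : f 0 = 0 := by
  have := hf 2 two_pos 0
  rw [smul_zero] at this
  linarith

theorem add (hf : IsPosHomogeneous f) (hg : IsPosHomogeneous g) :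
    IsPosHomogeneous fun z ↦ f z + g z :=
  fun α hα y ↦ by simp only [hf α hα, hg α hα, mul_add]

theorem sub (hf : IsPosHomogeneous f) (hg : IsPosHomogeneous g) :
    IsPosHomogeneous fun z ↦ f z - g z :=
  fun α hα y ↦ by simp only [hf α hα, hg α hα, mul_sub]

theorem div_const (hf : IsPosHomogeneous f) (c : ℝ) : IsPosHomogeneous fun z ↦ f z / c :=
  fun α hα y ↦ by simp only [hf α hα, mul_div_assoc]

end Algebra

variable {E : Type*} [NormedAddCommGroup E] [NormedSpace ℝ E] {f : E → ℝ} {y : E} {α : ℝ}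

theorem contDiffAt_smul (hf : IsPosHomogeneous f) {k : WithTop ℕ∞} (h : ContDiffAt ℝ k f y)
    (hα : 0 < α) : ContDiffAt ℝ k f (α • y) := by
  have heq : f = fun z ↦ α * f (α⁻¹ • z) := by
    ext z
    rw [← hf α hα, smul_inv_smul₀ hα.ne']
  rw [heq]
  have hy : ContDiffAt ℝ k f (α⁻¹ • α • y) := by rwa [inv_smul_smul₀ hα.ne']
  exact contDiffAt_const.mul (hy.comp (α • y) (contDiff_const_smul α⁻¹).contDiffAt)

theorem fderiv_smul (hf : IsPosHomogeneous f) (hα : 0 < α) (y : E) :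
    fderiv ℝ f (α • y) = fderiv ℝ f y := by
  have hscale : (fun z ↦ f (α • z)) = α • f := funext (hf α hα)
  have := fderiv_comp_smul (𝕜 := ℝ) (f := f) (x := y) α
  rw [hscale, fderiv_const_smul_field] at this
  exact (smul_right_injective _ hα.ne' this).symm

theorem fderiv_fderiv_smul (hf : IsPosHomogeneous f) (hα : 0 < α) (y : E) :
    fderiv ℝ (fderiv ℝ f) (α • y) = α⁻¹ • fderiv ℝ (fderiv ℝ f) y := by
  have := fderiv_comp_smul (𝕜 := ℝ) (f := fderiv ℝ f) (x := y) α
  rw [funext (hf.fderiv_smul hα)] at this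
  rw [this, inv_smul_smul₀ hα.ne']

theorem fderiv_apply_self (hf : IsPosHomogeneous f) (h : DifferentiableAt ℝ f y) :
    fderiv ℝ f y y = f y := by
  have hray : HasDerivAt (fun α : ℝ ↦ α • y) y 1 := by
    simpa using (hasDerivAt_id (1 : ℝ)).smul_const y
  have hcomp : HasDerivAt (fun α : ℝ ↦ f (α • y)) (fderiv ℝ f y y) 1 :=
    h.hasFDerivAt.comp_hasDerivAt_of_eq 1 hray (one_smul ℝ y).symm
  have hlin : (fun α : ℝ ↦ f (α • y)) =ᶠ[𝓝 1] fun α ↦ α * f y :=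
    (eventually_gt_nhds one_pos).mono fun α hα ↦ hf α hα y
  simpa using (hcomp.congr_of_eventuallyEq hlin.symm).unique ((hasDerivAt_id 1).mul_const (f y))

theorem fderiv_fderiv_apply_self (hf : IsPosHomogeneous f)
    (h : DifferentiableAt ℝ (fderiv ℝ f) y) : fderiv ℝ (fderiv ℝ f) y y = 0 := by
  have hray : HasDerivAt (fun α : ℝ ↦ α • y) y 1 := by
    simpa using (hasDerivAt_id (1 : ℝ)).smul_const y
  have hcomp : HasDerivAt (fun α : ℝ ↦ fderiv ℝ f (α • y)) (fderiv ℝ (fderiv ℝ f) y y) 1 :=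
    h.hasFDerivAt.comp_hasDerivAt_of_eq 1 hray (one_smul ℝ y).symm
  have hconst : (fun α : ℝ ↦ fderiv ℝ f (α • y)) =ᶠ[𝓝 1] fun _ ↦ fderiv ℝ f y :=
    (eventually_gt_nhds one_pos).mono fun α hα ↦ hf.fderiv_smul hα y
  exact (hcomp.congr_of_eventuallyEq hconst.symm).unique (hasDerivAt_const 1 _)

theorem fderiv_fderiv_add_smul_self (hf : IsPosHomogeneous f) (h : ContDiffAt ℝ 2 f y)
    (v w : E) (b c : ℝ) :
    fderiv ℝ (fderiv ℝ f) y (v + b • y) (w + c • y) = fderiv ℝ (fderiv ℝ f) y v w := by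
  have hleft := hf.fderiv_fderiv_apply_self (differentiableAt_fderiv_of_contDiffAt_two h)
  have hright : fderiv ℝ (fderiv ℝ f) y v y = 0 := by
    rw [h.isSymmSndFDerivAt (by simp) v y, hleft, zero_apply]
  simp [hleft, hright]

theorem hessianPosDef_sq_iff (hf : IsPosHomogeneous f) (h : ContDiffAt ℝ 2 f y) (hpos : 0 < f y) :
    HessianPosDef (fun z ↦ f z ^ 2) y ↔
      ∀ θ ∉ Submodule.span ℝ {y}, 0 < fderiv ℝ (fderiv ℝ f) y θ θ := by
  have heuler := hf.fderiv_apply_self (h.differentiableAt two_ne_zero)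
  have hsq : ∀ θ, iteratedFDeriv ℝ 2 (fun z ↦ f z ^ 2) y ![θ, θ] =
      2 * fderiv ℝ f y θ ^ 2 + 2 * f y * fderiv ℝ (fderiv ℝ f) y θ θ := fun θ ↦ by
    rw [iteratedFDeriv_two_apply]
    exact fderiv_fderiv_sq_apply_self h θ
  simp only [HessianPosDef, hsq]
  constructor
  · intro hdef θ hθ
    set c := -(fderiv ℝ f y θ / f y) with hc
    have hker : fderiv ℝ f y (θ + c • y) = 0 := by
      rw [map_add, map_smul, heuler, smul_eq_mul, hc]
      field_simp
      ring
    have hne : θ + c • y ≠ 0 := fun h0 ↦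
      hθ (Submodule.mem_span_singleton.2 ⟨-c, by rw [neg_smul, eq_neg_of_add_eq_zero_left h0]⟩)
    have := hdef _ hne
    rw [hker, hf.fderiv_fderiv_add_smul_self h] at this
    exact pos_of_mul_pos_right (by simpa using this) (by positivity)
  · intro hdef θ hθ
    by_cases hspan : θ ∈ Submodule.span ℝ {y}
    · obtain ⟨c, rfl⟩ := Submodule.mem_span_singleton.1 hspan
      have hc : c ≠ 0 := by
        rintro rfl
        exact hθ (zero_smul ℝ y)
      have hzero : fderiv ℝ (fderiv ℝ f) y (c • y) (c • y) = 0 := by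
        simpa using hf.fderiv_fderiv_add_smul_self h 0 0 c c
      rw [hzero, map_smul, heuler, smul_eq_mul]
      positivity
    · have := hdef θ hspan
      positivity

end IsPosHomogeneous

/-- At the base point `x`, the equation `t = P (y + t • x)` has for every `y` the unique solution
`t = u y`. For `P` a Minkowski norm, `u` is the Funk metric at `x`. -/
def IsFunkSolution {E : Type*} [AddCommGroup E] [Module ℝ E] (P : E → ℝ) (x : E) (u : E → ℝ) :
    Prop :=
  ∀ y t, t = P (y + t • x) ↔ t = u y

namespace IsFunkSolution

section Algebra

variable {E : Type*} [AddCommGroup E] [Module ℝ E] {P u : E → ℝ} {x y : E} {μ : ℝ}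

theorem apply_eq (hu : IsFunkSolution P x u) (y : E) : u y = P (y + u y • x) :=
  (hu y (u y)).2 rfl

theorem isPosHomogeneous (hu : IsFunkSolution P x u) (hP : IsPosHomogeneous P) :
    IsPosHomogeneous u := fun α hα y ↦ by
  refine ((hu (α • y) (α * u y)).1 ?_).symm
  rw [mul_smul, ← smul_add, hP α hα, ← hu.apply_eq y]

theorem one_add_mul_pos (hu : IsFunkSolution P (μ • y) u) (hP : IsPosHomogeneous P)
    (hsign : 0 < P y * P (-y)) : 0 < 1 + μ * u y := by
  have hsol : u y = P ((1 + μ * u y) • y) := by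
    rw [← add_smul_smul_self, ← hu.apply_eq]
  by_contra! hle
  rcases hle.eq_or_lt with hzero | hneg
  · rw [hzero, zero_smul, hP.map_zero] at hsol
    simp [hsol] at hzero
  have hscaled : u y = -(1 + μ * u y) * P (-y) := by
    rw [← hP _ (neg_pos.2 hneg), neg_smul_neg, ← hsol]
  have hmul : μ * P y < 0 := by
    have hprod : μ * P y * u y ^ 2 = -(1 + μ * u y) * (P y * P (-y)) * (μ * u y) := by
      linear_combination μ * P y * u y * hscaled
    have : -(1 + μ * u y) * (P y * P (-y)) * (μ * u y) < 0 :=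
      mul_neg_of_pos_of_neg (mul_pos (neg_pos.2 hneg) hsign) (by linarith)
    exact neg_of_mul_neg_left (hprod.trans_lt this) (sq_nonneg _)
  have hden : 0 < 1 - μ * P y := by linarith
  have hother : 1 + μ * (P y / (1 - μ * P y)) = (1 - μ * P y)⁻¹ := by
    field_simp
    ring
  have huniq : P y / (1 - μ * P y) = u y := (hu y _).1 <| by
    rw [add_smul_smul_self, hother, hP _ (inv_pos.2 hden), div_eq_inv_mul]
  rw [← huniq, hother] at hneg
  exact hneg.not_gt (inv_pos.2 hden)

theorem apply_self (hu : IsFunkSolution P (μ • y) u) (hP : IsPosHomogeneous P)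
    (hpos : 0 < 1 + μ * u y) : u y = (1 + μ * u y) * P y := by
  rw [← hP _ hpos, ← add_smul_smul_self, ← hu.apply_eq]

theorem half_sub_apply_self {Q v : E → ℝ} (hu : IsFunkSolution P (μ • y) u)
    (hv : IsFunkSolution Q (μ • y) v) (hP : IsPosHomogeneous P) (hQ : IsPosHomogeneous Q)
    (hupos : 0 < 1 + μ * u y) (hvpos : 0 < 1 + μ * v y) :
    (u y - v y) / 2 = (1 + μ * u y) * (1 + μ * v y) * ((P y - Q y) / 2) := by
  linear_combination (1 + μ * v y) / 2 * hu.apply_self hP hupos -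
    (1 + μ * u y) / 2 * hv.apply_self hQ hvpos

end Algebra

variable {E : Type*} [NormedAddCommGroup E] [NormedSpace ℝ E] {P Q u v : E → ℝ} {y : E} {μ : ℝ}

theorem fderiv_fderiv_eq (hu : IsFunkSolution P (μ • y) u) (hP : IsPosHomogeneous P)
    (hpos : 0 < 1 + μ * u y) (hP2 : ContDiffAt ℝ 2 P y) (hu2 : ContDiffAt ℝ 2 u y) :
    fderiv ℝ (fderiv ℝ u) y = fderiv ℝ (fderiv ℝ P) y := by
  ext v w
  have hbase := add_smul_smul_self y μ (u y)
  have hP2' : ContDiffAt ℝ 2 P (y + u y • μ • y) := hbase ▸ hP.contDiffAt_smul hP2 hpos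
  have himplicit := fderiv_fderiv_apply_of_eventuallyEq_comp_add_smul hP2' hu2
    (Eventually.of_forall hu.apply_eq) v w
  rw [hbase, hP.fderiv_fderiv_smul hpos, hP.fderiv_smul hpos, smul_smul, smul_smul,
    smul_apply, smul_apply,
    hP.fderiv_fderiv_add_smul_self hP2, map_smul,
    hP.fderiv_apply_self (hP2.differentiableAt two_ne_zero), smul_eq_mul, smul_eq_mul] at himplicit
  have hinv : (1 + μ * u y) * (1 - μ * P y) = 1 := by
    linear_combination μ * hu.apply_self hP hpos
  have hcancel := mul_inv_cancel₀ hpos.ne'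
  linear_combination (1 + μ * u y) * himplicit +
    fderiv ℝ (fderiv ℝ P) y v w * hcancel - fderiv ℝ (fderiv ℝ u) y v w * hinv

theorem hessianPosDef_half_sub_sq_iff (hu : IsFunkSolution P (μ • y) u)
    (hv : IsFunkSolution Q (μ • y) v) (hP : IsPosHomogeneous P) (hQ : IsPosHomogeneous Q)
    (hPsign : 0 < P y * P (-y)) (hQsign : 0 < Q y * Q (-y)) (hlt : Q y < P y)
    (hP2 : ContDiffAt ℝ 2 P y) (hQ2 : ContDiffAt ℝ 2 Q y)
    (hu2 : ContDiffAt ℝ 2 u y) (hv2 : ContDiffAt ℝ 2 v y) :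
    HessianPosDef (fun z ↦ ((P z - Q z) / 2) ^ 2) y ↔
      HessianPosDef (fun z ↦ ((u z - v z) / 2) ^ 2) y := by
  have hupos := hu.one_add_mul_pos hP hPsign
  have hvpos := hv.one_add_mul_pos hQ hQsign
  have hPQ : 0 < (P y - Q y) / 2 := by linarith
  have huv : 0 < (u y - v y) / 2 := by
    rw [hu.half_sub_apply_self hv hP hQ hupos hvpos]
    positivity
  rw [((hP.sub hQ).div_const 2).hessianPosDef_sq_iff ((hP2.sub hQ2).div_const 2) hPQ,
    (((hu.isPosHomogeneous hP).sub (hv.isPosHomogeneous hQ)).div_const 2).hessianPosDef_sq_iff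
      ((hu2.sub hv2).div_const 2) huv,
    fderiv_fderiv_half_sub hP2 hQ2, fderiv_fderiv_half_sub hu2 hv2,
    hu.fderiv_fderiv_eq hP hupos hP2 hu2, hv.fderiv_fderiv_eq hQ hvpos hQ2 hv2]

end IsFunkSolution

theorem stmt_15_general {E : Type*} [NormedAddCommGroup E] [NormedSpace ℝ E]
    (hrank : 1 < Module.rank ℝ E) {Ω : Set E} (hΩ0 : (0 : E) ∈ Ω) {ψ φ : E → ℝ}
    (hψhom : IsPosHomogeneous ψ) (hφhom : IsPosHomogeneous φ)
    (hψ : ContDiffOn ℝ 2 ψ {y | y ≠ 0}) (hφ : ContDiffOn ℝ 2 φ {y | y ≠ 0})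
    (hψpos : ∀ y, y ≠ 0 → 0 < ψ y)
    (hsumne : ∀ y, y ≠ 0 → φ y + ψ y ≠ 0) (hdiffne : ∀ y, y ≠ 0 → φ y - ψ y ≠ 0)
    {Φp Φm : E → E → ℝ}
    (hΦp : ∀ x ∈ Ω, IsFunkSolution (fun z ↦ φ z + ψ z) x (Φp x))
    (hΦm : ∀ x ∈ Ω, IsFunkSolution (fun z ↦ φ z - ψ z) x (Φm x))
    (hΦp2 : ∀ x ∈ Ω, ContDiffOn ℝ 2 (Φp x) {y | y ≠ 0})
    (hΦm2 : ∀ x ∈ Ω, ContDiffOn ℝ 2 (Φm x) {y | y ≠ 0}) {y : E} (hy : y ≠ 0) :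
    HessianPosDef (fun z ↦ ψ z ^ 2) y ↔
      ∀ μ : ℝ, μ • y ∈ Ω → HessianPosDef (fun z ↦ ((Φp (μ • y) z - Φm (μ • y) z) / 2) ^ 2) y := by
  have hconn : IsPreconnected {z : E | z ≠ 0} :=
    (isConnected_compl_singleton_of_one_lt_rank hrank 0).isPreconnected
  have hnhds : {z : E | z ≠ 0} ∈ 𝓝 y := isOpen_ne.mem_nhds hy
  have hsum := hφ.add hψ
  have hdiff := hφ.sub hψ
  have hhalf : ψ = fun z ↦ (φ z + ψ z - (φ z - ψ z)) / 2 := by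
    ext z
    ring
  have hiff : ∀ μ : ℝ, μ • y ∈ Ω → (HessianPosDef (fun z ↦ ψ z ^ 2) y ↔
      HessianPosDef (fun z ↦ ((Φp (μ • y) z - Φm (μ • y) z) / 2) ^ 2) y) := fun μ hμ ↦ by
    rw [hhalf]
    exact (hΦp _ hμ).hessianPosDef_half_sub_sq_iff (hΦm _ hμ) (hφhom.add hψhom) (hφhom.sub hψhom)
      (mul_pos_of_continuousOn_of_ne_zero hconn hsum.continuousOn hsumne hy (neg_ne_zero.2 hy))
      (mul_pos_of_continuousOn_of_ne_zero hconn hdiff.continuousOn hdiffne hy (neg_ne_zero.2 hy))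
      (by linarith [hψpos y hy]) (hsum.contDiffAt hnhds) (hdiff.contDiffAt hnhds)
      ((hΦp2 _ hμ).contDiffAt hnhds) ((hΦm2 _ hμ).contDiffAt hnhds)
  exact ⟨fun h μ hμ ↦ (hiff μ hμ).1 h, fun h ↦ (hiff 0 (by simpa)).2 (h 0 (by simpa))⟩

/-- (Key lemma for `𝐊 = −1`.) With `Φ₊`, `Φ₋` the unique (smooth)
solutions of `Φ± = (φ̄ ± ψ̄)(y + Φ±•x)` on `Ω × ℝⁿ` and `F̄ = (Φ₊ − Φ₋)/2`, for every
`y ≠ 0` the second derivative of `ψ̄²` at `y` is positive definite iff for every `μ` with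
`μ•y ∈ Ω` the second derivative of `F̄(μ•y, ·)²` at `y` is positive definite. -/
theorem stmt_15 (n : ℕ) (hn : 2 ≤ n)
    (Ω : Set (EuclideanSpace ℝ (Fin n)))
    (hΩopen : IsOpen Ω) (hΩconn : IsConnected Ω)
    (hΩ0 : (0 : EuclideanSpace ℝ (Fin n)) ∈ Ω)
    (ψb φb : EuclideanSpace ℝ (Fin n) → ℝ)
    (hψhom : ∀ α : ℝ, 0 < α → ∀ y, ψb (α • y) = α * ψb y)
    (hφhom : ∀ α : ℝ, 0 < α → ∀ y, φb (α • y) = α * φb y)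
    (hψsmooth : ContDiffOn ℝ (⊤ : ℕ∞) ψb {y | y ≠ 0})
    (hφsmooth : ContDiffOn ℝ (⊤ : ℕ∞) φb {y | y ≠ 0})
    (hψpos : ∀ y : EuclideanSpace ℝ (Fin n), y ≠ 0 → 0 < ψb y)
    (hsumne : ∀ y : EuclideanSpace ℝ (Fin n), y ≠ 0 → φb y + ψb y ≠ 0)
    (hdiffne : ∀ y : EuclideanSpace ℝ (Fin n), y ≠ 0 → φb y - ψb y ≠ 0)
    (Φp Φm : EuclideanSpace ℝ (Fin n) → EuclideanSpace ℝ (Fin n) → ℝ)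
    (hΦp : ∀ x ∈ Ω, ∀ y, Φp x y = φb (y + Φp x y • x) + ψb (y + Φp x y • x))
    (hΦpuniq : ∀ x ∈ Ω, ∀ y, ∀ t : ℝ, t = φb (y + t • x) + ψb (y + t • x) → t = Φp x y)
    (hΦm : ∀ x ∈ Ω, ∀ y, Φm x y = φb (y + Φm x y • x) - ψb (y + Φm x y • x))
    (hΦmuniq : ∀ x ∈ Ω, ∀ y, ∀ t : ℝ, t = φb (y + t • x) - ψb (y + t • x) → t = Φm x y)
    (hΦpsmooth : ContDiffOn ℝ (⊤ : ℕ∞)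
      (fun p : EuclideanSpace ℝ (Fin n) × EuclideanSpace ℝ (Fin n) => Φp p.1 p.2)
      (Ω ×ˢ {y | y ≠ 0}))
    (hΦmsmooth : ContDiffOn ℝ (⊤ : ℕ∞)
      (fun p : EuclideanSpace ℝ (Fin n) × EuclideanSpace ℝ (Fin n) => Φm p.1 p.2)
      (Ω ×ˢ {y | y ≠ 0})) :
    ∀ y : EuclideanSpace ℝ (Fin n), y ≠ 0 →
      ((∀ θ : EuclideanSpace ℝ (Fin n), θ ≠ 0 →
          0 < iteratedFDeriv ℝ 2 (fun z => ψb z ^ 2) y ![θ, θ]) ↔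
        (∀ μ : ℝ, μ • y ∈ Ω → ∀ θ : EuclideanSpace ℝ (Fin n), θ ≠ 0 →
          0 < iteratedFDeriv ℝ 2
            (fun z => ((Φp (μ • y) z - Φm (μ • y) z) / 2) ^ 2) y ![θ, θ])) := by
  have hrank : 1 < Module.rank ℝ (EuclideanSpace ℝ (Fin n)) := by
    rw [← Module.finrank_eq_rank, finrank_euclideanSpace_fin]
    exact_mod_cast hn
  have htwo : (2 : WithTop ℕ∞) ≤ (⊤ : ℕ∞) := WithTop.coe_le_coe.2 le_top
  exact fun y hy ↦ stmt_15_general hrank hΩ0 hψhom hφhom (hψsmooth.of_le htwo)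
    (hφsmooth.of_le htwo) hψpos hsumne hdiffne
    (fun x hx y t ↦ ⟨hΦpuniq x hx y t, fun h ↦ h ▸ hΦp x hx y⟩)
    (fun x hx y t ↦ ⟨hΦmuniq x hx y t, fun h ↦ h ▸ hΦm x hx y⟩)
    (fun _ hx ↦ contDiffOn_of_contDiffOn_prod (hΦpsmooth.of_le htwo) hx)
    (fun _ hx ↦ contDiffOn_of_contDiffOn_prod (hΦmsmooth.of_le htwo) hx) hy
end

section
/- Fix a₁ ∈ [0,1) and set a := (a₁, 0) ∈ ℝ², φ(y) := ‖y‖ + ⟨a,y⟩, and Ω := {x ∈ ℝ² : φ(x) < 1}. Let P : Ω × ℝ² → ℝ be the unique function with P(x,y) = φ(y + P(x,y)•x) for all (x,y) ∈ Ω × ℝ² (the Funk metric of Ω), which is C^∞ on Ω × (ℝ² \ {0}), and define F(x,y) := P(x,y)·(1 + (D_yP)(x,y)(x)) for y ≠ 0, where (D_yP)(x,y) is the Fréchet derivative of z ↦ P(x,z) at z = y. Let 𝒪 := {x ∈ Ω : for every y ≠ 0 the second Fréchet derivative of z ↦ F(x,z)² at z = y is positive definite}. Writing x = (x₁, x₂),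 the set 𝒪 is given exactly as follows: (1) if 0 ≤ a₁ < 2√2/3 then 𝒪 = Ω; (2) if a₁ = 2√2/3 then 𝒪 = Ω \ {x : x₁ = −3√2/2}; (3) if 2√2/3 < a₁ < 1 then 𝒪 = Ω ∩ {x : 8·(1 − a₁²)·(x₁ + a₁/(4·(1 − a₁²)))² − (9·a₁² − 8)·x₂² > (9·a₁² − 8)/(2·(1 − a₁²))}. -/
open scoped RealInnerProductSpace

/-!
Fix `x` with `φ(x) < 1`. Every `y ≠ 0` is a positive multiple of `Ψ(e) = e - φ(e) x` for a unit
vector `e`, and `P(x, Ψ(e)) = φ(e)`. With `κ(e) = 1 - ⟨a, x⟩ - ⟨e, x⟩`, Euler's relation and the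
derivative of `P` along `Ψ` of the unit circle give `F(x, Ψ(e)) = (1 + ⟨a, e⟩) / κ(e)`.

By homogeneity, positivity of the Hessian of `F²` at `Ψ(e)` only has to be tested by the second
derivative of `F` in the direction tangent to `Ψ` of the unit circle. A second differentiation along
this curve `γ`, which satisfies `γ'' = -γ - x`, evaluates it as `Q(e) / κ(e)³` with an explicit `Q`.
Completing the square in `4 ‖x‖² Q(e)` leaves a multiple of
`(2 + ⟨a, x⟩)² - (9 ‖a‖² - 8) ‖x‖²`, and some `e` makes the square vanish whenever this number is
not positive; hence its sign alone decides whether `x ∈ 𝒪`.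
-/

/-- Positive homogeneity of degree `k` away from the origin. The value at `0` is left free because
the metrics below are only prescribed for nonzero vectors. -/
def PosHomogeneous {E G : Type*} [AddCommGroup E] [Module ℝ E] [AddCommGroup G] [Module ℝ G]
    (k : ℕ) (f : E → G) : Prop :=
  ∀ ⦃r : ℝ⦄, 0 < r → ∀ ⦃y : E⦄, y ≠ 0 → f (r • y) = r ^ k • f y

/-- Strong convexity of a Finsler function: the Hessian of its square is positive definite away from
the origin. -/
def IsStronglyConvex {E : Type*} [NormedAddCommGroup E] [NormedSpace ℝ E] (F : E → ℝ) : Prop :=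
  ∀ y : E, y ≠ 0 → ∀ θ : E, θ ≠ 0 → 0 < iteratedFDeriv ℝ 2 (fun z => F z ^ 2) y ![θ, θ]

section Calculus

variable {E G : Type*} [NormedAddCommGroup E] [NormedSpace ℝ E]
  [NormedAddCommGroup G] [NormedSpace ℝ G]

namespace PosHomogeneous

protected lemma pow {k : ℕ} {f : E → ℝ} (hf : PosHomogeneous k f) (n : ℕ) :
    PosHomogeneous (k * n) fun y => f y ^ n := by
  intro r hr y hy
  simp only [hf hr hy, smul_eq_mul, mul_pow, pow_mul]

protected lemma fderiv {k : ℕ} {f : E → G} (hf : PosHomogeneous (k + 1) f) :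
    PosHomogeneous k (fderiv ℝ f) := by
  intro r hr y hy
  have hscale : (fun z => f (r • z)) =ᶠ[nhds y] r ^ (k + 1) • f := by
    filter_upwards [eventually_ne_nhds hy] with z hz using hf hr hz
  have hderiv : r • fderiv ℝ f (r • y) = r • r ^ k • fderiv ℝ f y := by
    rw [← fderiv_comp_smul, hscale.fderiv_eq, fderiv_const_smul_field, Pi.smul_apply, smul_smul,
      ← pow_succ']
  exact smul_right_injective _ hr.ne' hderiv

lemma fderiv_apply_self {k : ℕ} {f : E → G} (hf : PosHomogeneous k f) {y : E} (hy : y ≠ 0)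
    (hd : DifferentiableAt ℝ f y) : fderiv ℝ f y y = (k : ℝ) • f y := by
  have hray : HasDerivAt (fun r : ℝ => r • y) y 1 := by
    simpa using! (hasDerivAt_id (1 : ℝ)).smul_const y
  have hchain : HasDerivAt (fun r : ℝ => f (r • y)) (fderiv ℝ f y y) 1 := by
    refine HasFDerivAt.comp_hasDerivAt (1 : ℝ) ?_ hray
    simpa using hd.hasFDerivAt
  have hpow : HasDerivAt (fun r : ℝ => r ^ k • f y) ((k : ℝ) • f y) 1 := by
    simpa using! (hasDerivAt_pow k (1 : ℝ)).smul_const (f y)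
  refine hchain.unique (hpow.congr_of_eventuallyEq ?_)
  filter_upwards [eventually_gt_nhds one_pos] with r hr using hf hr hy

lemma fderiv_fderiv_apply_self {f : E → G} (hf : PosHomogeneous 1 f) {y : E} (hy : y ≠ 0)
    (hd : ContDiffAt ℝ 2 f y) : fderiv ℝ (fderiv ℝ f) y y = 0 := by
  have hdd : DifferentiableAt ℝ (fderiv ℝ f) y :=
    (hd.fderiv_right (m := 1) (by norm_num)).differentiableAt (by norm_num)
  have hf' : PosHomogeneous 0 (fderiv ℝ f) := hf.fderiv
  simpa using hf'.fderiv_apply_self hy hdd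

lemma fderiv_fderiv_smul_add_smul {F : E → ℝ} (hF : PosHomogeneous 1 F) {y : E} (hy : y ≠ 0)
    (hd : ContDiffAt ℝ 2 F y) (v : E) (s t : ℝ) :
    fderiv ℝ (fderiv ℝ F) y (s • y + t • v) (s • y + t • v)
      = t ^ 2 * fderiv ℝ (fderiv ℝ F) y v v := by
  have hker := hF.fderiv_fderiv_apply_self hy hd
  have hsymm : fderiv ℝ (fderiv ℝ F) y v y = 0 := by
    rw [hd.isSymmSndFDerivAt (by simp) v y, hker, zero_apply]
  simp only [map_add, map_smul, hker, hsymm, smul_apply, smul_zero, zero_add, smul_eq_mul]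
  ring

end PosHomogeneous

lemma iteratedFDeriv_two_sq_apply {F : E → ℝ} {y : E} (hF : ContDiffAt ℝ 2 F y) (θ : E) :
    iteratedFDeriv ℝ 2 (fun z => F z ^ 2) y ![θ, θ]
      = 2 * fderiv ℝ F y θ ^ 2 + 2 * F y * fderiv ℝ (fderiv ℝ F) y θ θ := by
  have hfirst : fderiv ℝ (fun z => F z ^ 2) =ᶠ[nhds y] fun z => (2 * F z) • fderiv ℝ F z := by
    filter_upwards [hF.eventually (by simp)] with z hz
    simpa using! ((hz.differentiableAt (by norm_num)).hasFDerivAt.pow 2).fderiv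
  have hd : HasFDerivAt F (fderiv ℝ F y) y := (hF.differentiableAt (by norm_num)).hasFDerivAt
  have hdd : HasFDerivAt (fderiv ℝ F) (fderiv ℝ (fderiv ℝ F) y) y :=
    ((hF.fderiv_right (m := 1) (by norm_num)).differentiableAt (by norm_num)).hasFDerivAt
  have hsecond := ((hd.const_mul 2).smul hdd).congr_of_eventuallyEq hfirst
  rw [iteratedFDeriv_two_apply, hsecond.fderiv]
  simp only [Matrix.cons_val_zero, Matrix.cons_val_one, add_apply, smul_apply,
    ContinuousLinearMap.smulRight_apply, smul_eq_mul]
  ring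

lemma second_deriv_comp_eq {F : E → ℝ} {γ γ' : ℝ → E} {γ'' : E} {f' : ℝ → ℝ} {f'' t : ℝ}
    (hF : ContDiffAt ℝ 2 F (γ t)) (hγ : ∀ s, HasDerivAt γ (γ' s) s) (hγ' : HasDerivAt γ' γ'' t)
    (hf : ∀ s, HasDerivAt (fun u => F (γ u)) (f' s) s) (hf' : HasDerivAt f' f'' t) :
    f'' = fderiv ℝ (fderiv ℝ F) (γ t) (γ' t) (γ' t) + fderiv ℝ F (γ t) γ'' := by
  have hfirst : f' =ᶠ[nhds t] fun s => fderiv ℝ F (γ s) (γ' s) := by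
    filter_upwards [(hγ t).continuousAt.eventually (hF.eventually (by simp))] with s hs
    exact (hf s).unique
      ((hs.differentiableAt (by norm_num)).hasFDerivAt.comp_hasDerivAt s (hγ s))
  have hdd : HasFDerivAt (fderiv ℝ F) (fderiv ℝ (fderiv ℝ F) (γ t)) (γ t) :=
    ((hF.fderiv_right (m := 1) (by norm_num)).differentiableAt (by norm_num)).hasFDerivAt
  exact hf'.unique
    (((hdd.comp_hasDerivAt t (hγ t)).clm_apply hγ').congr_of_eventuallyEq hfirst)

lemma PosHomogeneous.forall_iteratedFDeriv_two_sq_pos_iff (hE : Module.finrank ℝ E = 2) {F : E → ℝ}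
    (hF : PosHomogeneous 1 F) {y v : E} (hd : ContDiffAt ℝ 2 F y) (hpos : 0 < F y)
    (hyv : LinearIndependent ℝ ![y, v]) :
    (∀ θ : E, θ ≠ 0 → 0 < iteratedFDeriv ℝ 2 (fun z => F z ^ 2) y ![θ, θ]) ↔
      0 < fderiv ℝ (fderiv ℝ F) y v v := by
  have hy : y ≠ 0 := hyv.ne_zero 0
  have heuler : fderiv ℝ F y y = F y := by
    simpa using hF.fderiv_apply_self hy (hd.differentiableAt (by norm_num))
  simp only [iteratedFDeriv_two_sq_apply hd]
  constructor
  · intro h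
    set s : ℝ := -(fderiv ℝ F y v / F y) with hs
    have hθ : s • y + (1 : ℝ) • v ≠ 0 := fun h0 =>
      one_ne_zero (LinearIndependent.pair_iff.1 hyv s 1 h0).2
    have hcrit : fderiv ℝ F y (s • y + (1 : ℝ) • v) = 0 := by
      simp only [map_add, map_smul, heuler, smul_eq_mul, hs]
      field_simp
      ring
    have hpos' := h _ hθ
    rw [hcrit, hF.fderiv_fderiv_smul_add_smul hy hd] at hpos'
    exact pos_of_mul_pos_right (by simpa using hpos') (by positivity : 0 ≤ 2 * F y)
  · intro hv θ hθ
    obtain ⟨s, t, rfl⟩ : ∃ s t : ℝ, s • y + t • v = θ := by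
      have hspan := hyv.span_eq_top_of_card_eq_finrank (by simp [hE])
      rw [← Submodule.mem_span_pair, ← Matrix.range_cons_cons_empty y v ![], hspan]
      exact Submodule.mem_top
    rw [hF.fderiv_fderiv_smul_add_smul hy hd]
    rcases eq_or_ne t 0 with rfl | ht
    · have hs : s ≠ 0 := by rintro rfl; simp at hθ
      have hradial : fderiv ℝ F y (s • y + (0 : ℝ) • v) = s * F y := by simp [heuler]
      rw [hradial]
      positivity
    · positivity

lemma PosHomogeneous.iteratedFDeriv_two_sq_smul {F : E → ℝ} (hF : PosHomogeneous 1 F) {r : ℝ}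
    (hr : 0 < r) {y : E} (hy : y ≠ 0) :
    iteratedFDeriv ℝ 2 (fun z => F z ^ 2) (r • y) = iteratedFDeriv ℝ 2 (fun z => F z ^ 2) y := by
  have hsq : PosHomogeneous 2 fun z => F z ^ 2 := hF.pow 2
  have hgrad : PosHomogeneous 1 (fderiv ℝ fun z => F z ^ 2) := hsq.fderiv
  have hhess : PosHomogeneous 0 (fderiv ℝ (fderiv ℝ fun z => F z ^ 2)) := hgrad.fderiv
  ext θ
  rw [iteratedFDeriv_two_apply, iteratedFDeriv_two_apply, hhess hr hy, pow_zero, one_smul]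

lemma isStronglyConvex_congr {F F' : E → ℝ} (h : ∀ y, y ≠ 0 → F y = F' y) :
    IsStronglyConvex F ↔ IsStronglyConvex F' := by
  refine forall₂_congr fun y hy => ?_
  have hsq : (fun z => F z ^ 2) =ᶠ[nhds y] fun z => F' z ^ 2 := by
    filter_upwards [eventually_ne_nhds hy] with z hz
    rw [h z hz]
  rw [(hsq.iteratedFDeriv ℝ 2).eq_of_nhds]

end Calculus

section InnerProductSpace

variable {E : Type*} [NormedAddCommGroup E] [InnerProductSpace ℝ E]

lemma exists_orthonormalBasis_zero_eq (hE : Module.finrank ℝ E = 2) {e : E} (he : ‖e‖ = 1) :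
    ∃ b : OrthonormalBasis (Fin 2) ℝ E, b 0 = e := by
  have hfin : FiniteDimensional ℝ E := Module.finite_of_finrank_pos (by lia)
  have horth : Orthonormal ℝ (({0} : Set (Fin 2)).domRestrict fun _ => e) :=
    ⟨fun _ => he, fun i j hij => (hij (Subsingleton.elim i j)).elim⟩
  obtain ⟨b, hb⟩ := horth.exists_orthonormalBasis_extension_of_card_eq (by simp [hE])
  exact ⟨b, hb 0 rfl⟩

lemma exists_norm_eq_one_inner_eq (hE : 1 < Module.rank ℝ E) {n : E} {c : ℝ} (hc : |c| ≤ ‖n‖) :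
    ∃ e : E, ‖e‖ = 1 ∧ ⟪n, e⟫ = c := by
  have : Nontrivial E := (rank_pos_iff_nontrivial (R := ℝ)).1 (zero_lt_one.trans hE)
  obtain ⟨u, hu, hnu⟩ : ∃ u : E, ‖u‖ = 1 ∧ ⟪n, u⟫ = ‖n‖ := by
    rcases eq_or_ne n 0 with rfl | hn
    · obtain ⟨u, hu⟩ := exists_norm_eq E zero_le_one
      exact ⟨u, hu, by simp⟩
    · refine ⟨‖n‖⁻¹ • n, by simp [norm_smul, hn], ?_⟩
      rw [inner_smul_right, real_inner_self_eq_norm_sq]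
      field_simp
  have hsurj := (isPreconnected_sphere hE (0 : E) 1).intermediate_value
    (a := -u) (b := u) (f := fun e => ⟪n, e⟫) (by simpa) (by simpa) (by fun_prop)
  obtain ⟨e, he, hec⟩ := hsurj (by simpa [hnu] using abs_le.1 hc : c ∈ Set.Icc _ _)
  exact ⟨e, by simpa using he, hec⟩

/-- The Randers norm `φ` with drift vector `a`; it is positive off the origin when `‖a‖ < 1`. -/
def randersNorm (a y : E) : ℝ := ‖y‖ + ⟪a, y⟫

/-- `P` is the fibre over `x` of the Funk metric of `{φ < 1}`. -/
def IsFunkAt (a x : E) (P : E → ℝ) : Prop := ∀ y, P y = randersNorm a (y + P y • x)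

/-- The fibre over `x` of the projectively flat metric `F`, built from the fibre `P` of the Funk
metric. -/
noncomputable def flatMetric (x : E) (P : E → ℝ) (y : E) : ℝ := P y * (1 + fderiv ℝ P y x)

/-- The vector `y` with `y + φ(w) • x = w`, at which the Funk metric over `x` takes the value
`φ(w)`. -/
def funkPoint (a x w : E) : E := w - randersNorm a w • x

/-- The linear part of `funkPoint a x` on the unit sphere, where `φ(e) = 1 + ⟪a, e⟫` is affine. -/
noncomputable def shear (a x : E) : E →L[ℝ] E :=
  ContinuousLinearMap.id ℝ E - (innerSL ℝ a).smulRight x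

/-- The factor `κ(e)`, positive for unit vectors `e` when `φ(x) < 1`; its inverse is
`1 + D_yP(x, y)(x)` at `y = funkPoint a x e`. -/
def randersSlack (a x e : E) : ℝ := 1 - ⟪a, x⟫ - ⟪e, x⟫

variable {a x : E}

lemma randersNorm_smul {r : ℝ} (hr : 0 ≤ r) (y : E) :
    randersNorm a (r • y) = r * randersNorm a y := by
  rw [randersNorm, randersNorm, norm_smul, Real.norm_of_nonneg hr, inner_smul_right, mul_add]

lemma randersNorm_add_le (y z : E) :
    randersNorm a (y + z) ≤ randersNorm a y + randersNorm a z := by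
  simp only [randersNorm, inner_add_right]
  linarith [norm_add_le y z]

lemma randersNorm_pos (ha : ‖a‖ < 1) {y : E} (hy : y ≠ 0) : 0 < randersNorm a y := by
  have hcs := neg_le_of_abs_le (abs_real_inner_le_norm a y)
  have hlt := mul_lt_mul_of_pos_right ha (norm_pos_iff.2 hy)
  rw [randersNorm]
  linarith

lemma randersNorm_of_norm_eq_one {e : E} (he : ‖e‖ = 1) : randersNorm a e = 1 + ⟪a, e⟫ := by
  rw [randersNorm, he]

lemma randersSlack_pos (hx : randersNorm a x < 1) {e : E} (he : ‖e‖ = 1) :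
    0 < randersSlack a x e := by
  have hcs := real_inner_le_norm e x
  rw [randersNorm] at hx
  rw [randersSlack]
  rw [he, one_mul] at hcs
  linarith

lemma shear_apply (v : E) : shear a x v = v - ⟪a, v⟫ • x := by
  simp [shear]

lemma funkPoint_eq_shear_sub {e : E} (he : ‖e‖ = 1) : funkPoint a x e = shear a x e - x := by
  rw [funkPoint, shear_apply, randersNorm_of_norm_eq_one he]
  module

lemma funkPoint_smul {r : ℝ} (hr : 0 ≤ r) (w : E) :
    funkPoint a x (r • w) = r • funkPoint a x w := by
  rw [funkPoint, funkPoint, randersNorm_smul hr, smul_sub, mul_smul]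

lemma funkPoint_ne_zero (ha : ‖a‖ < 1) (hx : randersNorm a x < 1) {w : E} (hw : w ≠ 0) :
    funkPoint a x w ≠ 0 := by
  intro h0
  have hpos := randersNorm_pos ha hw
  have hself : randersNorm a w = randersNorm a w * randersNorm a x := by
    conv_lhs => rw [sub_eq_zero.1 h0, randersNorm_smul hpos.le]
  exact hx.ne (mul_eq_left₀ hpos.ne' |>.1 hself.symm)

lemma eq_of_eq_randersNorm_add_smul (hx : randersNorm a x < 1) {y : E} {s t : ℝ}
    (hs : s = randersNorm a (y + s • x)) (ht : t = randersNorm a (y + t • x)) : s = t := by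
  have hnotlt : ∀ {s t : ℝ}, s = randersNorm a (y + s • x) → t = randersNorm a (y + t • x) →
      ¬ s < t := by
    intro s t hs ht hst
    have hsum : y + t • x = (y + s • x) + (t - s) • x := by module
    have hle := randersNorm_add_le (a := a) (y + s • x) ((t - s) • x)
    rw [← hsum, ← ht, ← hs, randersNorm_smul (sub_nonneg.2 hst.le)] at hle
    nlinarith
  exact le_antisymm (not_lt.1 (hnotlt ht hs)) (not_lt.1 (hnotlt hs ht))

namespace IsFunkAt

variable {P : E → ℝ}

lemma apply_eq (hP : IsFunkAt a x P) (hx : randersNorm a x < 1) {y : E} {t : ℝ}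
    (ht : t = randersNorm a (y + t • x)) :
    P y = t :=
  eq_of_eq_randersNorm_add_smul hx (hP y) ht

lemma apply_funkPoint (hP : IsFunkAt a x P) (hx : randersNorm a x < 1) (w : E) :
    P (funkPoint a x w) = randersNorm a w :=
  hP.apply_eq hx (by rw [funkPoint, sub_add_cancel])

lemma funkPoint_add_smul (hP : IsFunkAt a x P) (y : E) : funkPoint a x (y + P y • x) = y := by
  rw [funkPoint, ← hP y, add_sub_cancel_right]

lemma posHomogeneous (hP : IsFunkAt a x P) (hx : randersNorm a x < 1) : PosHomogeneous 1 P := by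
  intro r hr y _
  refine hP.apply_eq hx ?_
  rw [pow_one, smul_eq_mul, mul_smul, ← smul_add, randersNorm_smul hr.le, ← hP y]

lemma posHomogeneous_flatMetric (hP : IsFunkAt a x P) (hx : randersNorm a x < 1) :
    PosHomogeneous 1 (flatMetric x P) := by
  intro r hr y hy
  have hP₁ := hP.posHomogeneous hx
  have hdP : PosHomogeneous 0 (fderiv ℝ P) := hP₁.fderiv
  simp only [flatMetric, hP₁ hr hy, hdP hr hy, pow_zero, pow_one, one_smul, smul_eq_mul, mul_assoc]

lemma exists_smul_funkPoint_eq (hP : IsFunkAt a x P) {y : E} (hy : y ≠ 0) :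
    ∃ r : ℝ, 0 < r ∧ ∃ e : E, ‖e‖ = 1 ∧ r • funkPoint a x e = y := by
  have hw : y + P y • x ≠ 0 := by
    intro h0
    have hPy : P y = 0 := by rw [hP y, h0]; simp [randersNorm]
    exact hy (by simpa [hPy] using h0)
  refine ⟨‖y + P y • x‖, norm_pos_iff.2 hw, ‖y + P y • x‖⁻¹ • (y + P y • x), ?_, ?_⟩
  · rw [norm_smul, norm_inv, norm_norm, inv_mul_cancel₀ (norm_ne_zero_iff.2 hw)]
  · rw [← funkPoint_smul (norm_nonneg _), smul_inv_smul₀ (norm_ne_zero_iff.2 hw),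
      hP.funkPoint_add_smul]

end IsFunkAt

lemma contDiffAt_flatMetric {P : E → ℝ} {y : E} (hP : ContDiffAt ℝ 3 P y) :
    ContDiffAt ℝ 2 (flatMetric x P) y :=
  (hP.of_le (by norm_num)).mul
    (contDiffAt_const.add ((hP.fderiv_right (m := 2) (by norm_num)).clm_apply contDiffAt_const))

/-- The unit circle, parametrised by arc length from `b 0` towards `b 1`. -/
noncomputable def circleCurve (b : OrthonormalBasis (Fin 2) ℝ E) (t : ℝ) : E :=
  Real.cos t • b 0 + Real.sin t • b 1

/-- The derivative of `circleCurve b`. -/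
noncomputable def circleVelocity (b : OrthonormalBasis (Fin 2) ℝ E) (t : ℝ) : E :=
  Real.cos t • b 1 - Real.sin t • b 0

section OrthonormalBasis

variable (b : OrthonormalBasis (Fin 2) ℝ E)

lemma inner_smul_add_inner_smul_eq (v : E) : ⟪b 0, v⟫ • b 0 + ⟪b 1, v⟫ • b 1 = v := by
  simpa [Fin.sum_univ_two] using b.sum_repr' v

lemma real_inner_eq_add_of_orthonormalBasis (u v : E) :
    ⟪u, v⟫ = ⟪u, b 0⟫ * ⟪b 0, v⟫ + ⟪u, b 1⟫ * ⟪b 1, v⟫ := by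
  simpa [Fin.sum_univ_two] using (b.sum_inner_mul_inner u v).symm

lemma circleCurve_zero : circleCurve b 0 = b 0 := by simp [circleCurve]

lemma circleVelocity_zero : circleVelocity b 0 = b 1 := by simp [circleVelocity]

lemma norm_circleCurve (t : ℝ) : ‖circleCurve b t‖ = 1 := by
  have hsq : ‖circleCurve b t‖ ^ 2 = 1 := by
    rw [← b.sum_sq_inner_right, Fin.sum_univ_two]
    simp [circleCurve, inner_add_right, inner_smul_right, b.inner_eq_ite]
  exact (pow_eq_one_iff_of_nonneg (norm_nonneg _) two_ne_zero).1 hsq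

lemma hasDerivAt_circleCurve (t : ℝ) :
    HasDerivAt (circleCurve b) (circleVelocity b t) t := by
  convert! ((Real.hasDerivAt_cos t).smul_const (b 0)).add
    ((Real.hasDerivAt_sin t).smul_const (b 1)) using 1
  rw [circleVelocity]
  module

lemma hasDerivAt_circleVelocity (t : ℝ) :
    HasDerivAt (circleVelocity b) (-circleCurve b t) t := by
  convert! ((Real.hasDerivAt_cos t).smul_const (b 1)).sub
    ((Real.hasDerivAt_sin t).smul_const (b 0)) using 1
  rw [circleCurve]
  module

lemma hasDerivAt_funkPoint_circleCurve (t : ℝ) :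
    HasDerivAt (fun s => funkPoint a x (circleCurve b s)) (shear a x (circleVelocity b t)) t := by
  simp only [funkPoint_eq_shear_sub (norm_circleCurve b _)]
  exact ((shear a x).hasFDerivAt.comp_hasDerivAt t (hasDerivAt_circleCurve b t)).sub_const x

lemma fderiv_funkPoint_shear_eq {G : E → ℝ} {g' : ℝ}
    (hG : DifferentiableAt ℝ G (funkPoint a x (b 0)))
    (hg : HasDerivAt (fun t => G (funkPoint a x (circleCurve b t))) g' 0) :
    fderiv ℝ G (funkPoint a x (b 0)) (shear a x (b 1)) = g' := by
  rw [← circleCurve_zero b] at hG ⊢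
  rw [← circleVelocity_zero b]
  exact (hG.hasFDerivAt.comp_hasDerivAt (0 : ℝ) (hasDerivAt_funkPoint_circleCurve b 0)).unique hg

lemma randersSlack_smul_eq_smul_funkPoint_add :
    randersSlack a x (b 0) • x
      = ⟪b 0, x⟫ • funkPoint a x (b 0) + ⟪b 1, x⟫ • shear a x (b 1) := by
  have hsplit : ⟪b 0, x⟫ • funkPoint a x (b 0) + ⟪b 1, x⟫ • shear a x (b 1)
      = (⟪b 0, x⟫ • b 0 + ⟪b 1, x⟫ • b 1)
        - (⟪b 0, x⟫ + (⟪a, b 0⟫ * ⟪b 0, x⟫ + ⟪a, b 1⟫ * ⟪b 1, x⟫)) • x := by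
    rw [funkPoint_eq_shear_sub (b.norm_eq_one 0), shear_apply, shear_apply]
    module
  rw [hsplit, inner_smul_add_inner_smul_eq, ← real_inner_eq_add_of_orthonormalBasis, randersSlack]
  module

lemma linearIndependent_funkPoint_shear (hslack : randersSlack a x (b 0) ≠ 0) :
    LinearIndependent ℝ ![funkPoint a x (b 0), shear a x (b 1)] := by
  refine LinearIndependent.pair_iff.2 fun s t hst => ?_
  set m : ℝ := s * (1 + ⟪a, b 0⟫) + t * ⟪a, b 1⟫ with hm
  have hvec : s • b 0 + t • b 1 = m • x := by
    rw [← sub_eq_zero, ← hst, funkPoint_eq_shear_sub (b.norm_eq_one 0), shear_apply, shear_apply]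
    module
  have hs : s = m * ⟪b 0, x⟫ := by
    simpa [inner_add_right, inner_smul_right, b.inner_eq_ite] using congrArg (⟪b 0, ·⟫) hvec
  have ht : t = m * ⟪b 1, x⟫ := by
    simpa [inner_add_right, inner_smul_right, b.inner_eq_ite] using congrArg (⟪b 1, ·⟫) hvec
  have hm0 : m * randersSlack a x (b 0) = 0 := by
    rw [randersSlack, real_inner_eq_add_of_orthonormalBasis b a x]
    linear_combination hm + (1 + ⟪a, b 0⟫) * hs + ⟪a, b 1⟫ * ht
  have hmz : m = 0 := (mul_eq_zero.1 hm0).resolve_right hslack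
  exact ⟨by rw [hs, hmz, zero_mul], by rw [ht, hmz, zero_mul]⟩

lemma hasDerivAt_one_add_inner_circleCurve (a : E) (t : ℝ) :
    HasDerivAt (fun s => 1 + ⟪a, circleCurve b s⟫) ⟪a, circleVelocity b t⟫ t :=
  ((innerSL ℝ a).hasFDerivAt.comp_hasDerivAt t (hasDerivAt_circleCurve b t)).const_add 1

lemma hasDerivAt_randersSlack_circleCurve (a x : E) (t : ℝ) :
    HasDerivAt (fun s => randersSlack a x (circleCurve b s)) (-⟪x, circleVelocity b t⟫) t := by
  simp only [randersSlack, real_inner_comm x]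
  exact ((innerSL ℝ x).hasFDerivAt.comp_hasDerivAt t (hasDerivAt_circleCurve b t)).const_sub _

lemma hasDerivAt_inner_circleVelocity (v : E) (t : ℝ) :
    HasDerivAt (fun s => ⟪v, circleVelocity b s⟫) (-⟪v, circleCurve b t⟫) t := by
  rw [← inner_neg_right]
  exact (innerSL ℝ v).hasFDerivAt.comp_hasDerivAt t (hasDerivAt_circleVelocity b t)

lemma hasDerivAt_div_randersSlack_circleCurve {t : ℝ}
    (hslack : randersSlack a x (circleCurve b t) ≠ 0) :
    HasDerivAt (fun s => (1 + ⟪a, circleCurve b s⟫) / randersSlack a x (circleCurve b s))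
      ((⟪a, circleVelocity b t⟫ * randersSlack a x (circleCurve b t)
        + (1 + ⟪a, circleCurve b t⟫) * ⟪x, circleVelocity b t⟫)
          / randersSlack a x (circleCurve b t) ^ 2) t := by
  convert! (hasDerivAt_one_add_inner_circleCurve b a t).div
    (hasDerivAt_randersSlack_circleCurve b a x t) hslack using 1
  ring

lemma hasDerivAt_deriv_div_randersSlack_circleCurve {t : ℝ}
    (hslack : randersSlack a x (circleCurve b t) ≠ 0) :
    HasDerivAt (fun s => (⟪a, circleVelocity b s⟫ * randersSlack a x (circleCurve b s)
        + (1 + ⟪a, circleCurve b s⟫) * ⟪x, circleVelocity b s⟫)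
          / randersSlack a x (circleCurve b s) ^ 2)
      (2 * ⟪x, circleVelocity b t⟫ * (⟪a, circleVelocity b t⟫ * randersSlack a x (circleCurve b t)
          + (1 + ⟪a, circleCurve b t⟫) * ⟪x, circleVelocity b t⟫)
            / randersSlack a x (circleCurve b t) ^ 3
        - (⟪a, circleCurve b t⟫ * randersSlack a x (circleCurve b t)
          + (1 + ⟪a, circleCurve b t⟫) * ⟪x, circleCurve b t⟫)
            / randersSlack a x (circleCurve b t) ^ 2) t := by
  have hκ := hasDerivAt_randersSlack_circleCurve b a x t
  have hnum := ((hasDerivAt_inner_circleVelocity b a t).fun_mul hκ).fun_add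
    ((hasDerivAt_one_add_inner_circleCurve b a t).fun_mul (hasDerivAt_inner_circleVelocity b x t))
  convert! hnum.fun_div (hκ.fun_pow 2) (pow_ne_zero 2 hslack) using 1
  field_simp
  ring

lemma PosHomogeneous.randersSlack_mul_fderiv_fderiv_shear {G : E → ℝ} (hG : PosHomogeneous 1 G)
    (hy : funkPoint a x (b 0) ≠ 0) (hd : ContDiffAt ℝ 2 G (funkPoint a x (b 0)))
    {g' : ℝ → ℝ} {g'' : ℝ}
    (hg : ∀ t, HasDerivAt (fun s => G (funkPoint a x (circleCurve b s))) (g' t) t)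
    (hg' : HasDerivAt g' g'' 0) :
    randersSlack a x (b 0) * fderiv ℝ (fderiv ℝ G) (funkPoint a x (b 0))
        (shear a x (b 1)) (shear a x (b 1))
      = randersSlack a x (b 0) * (g'' + G (funkPoint a x (b 0)))
        + ⟪b 0, x⟫ * G (funkPoint a x (b 0)) + ⟪b 1, x⟫ * g' 0 := by
  have hdiff := hd.differentiableAt (by norm_num)
  have hradial : fderiv ℝ G (funkPoint a x (b 0)) (funkPoint a x (b 0))
      = G (funkPoint a x (b 0)) := by
    simpa using hG.fderiv_apply_self hy hdiff
  have htangent := fderiv_funkPoint_shear_eq b hdiff (hg 0)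
  have haccel : shear a x (-b 0) = -funkPoint a x (b 0) - x := by
    rw [funkPoint_eq_shear_sub (b.norm_eq_one 0), map_neg]
    module
  have hsecond := second_deriv_comp_eq (by rwa [circleCurve_zero])
    (hasDerivAt_funkPoint_circleCurve b)
    ((shear a x).hasFDerivAt.comp_hasDerivAt (0 : ℝ) (hasDerivAt_circleVelocity b 0)) hg hg'
  have hlin := congrArg (fderiv ℝ G (funkPoint a x (b 0)))
    (randersSlack_smul_eq_smul_funkPoint_add (a := a) (x := x) b)
  simp only [circleCurve_zero, circleVelocity_zero, haccel, map_sub, map_neg, hradial] at hsecond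
  simp only [map_add, map_smul, smul_eq_mul, hradial, htangent] at hlin
  linear_combination hlin - randersSlack a x (b 0) * hsecond

end OrthonormalBasis

/-- The numerator `Q(e)`, for `e = b 0`, of the second derivative of the flat metric at
`funkPoint a x e` in the direction tangent to the image of the unit circle. -/
noncomputable def convexityForm (a x : E) (b : OrthonormalBasis (Fin 2) ℝ E) : ℝ :=
  randersSlack a x (b 0) ^ 2 + 3 * ⟪a, b 1⟫ * ⟪b 1, x⟫ * randersSlack a x (b 0)
    + 3 * (1 + ⟪a, b 0⟫) * ⟪b 1, x⟫ ^ 2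

namespace IsFunkAt

variable {P : E → ℝ}

lemma randersSlack_mul_one_add_fderiv (hP : IsFunkAt a x P) (hx : randersNorm a x < 1)
    (b : OrthonormalBasis (Fin 2) ℝ E) (hy : funkPoint a x (b 0) ≠ 0)
    (hd : DifferentiableAt ℝ P (funkPoint a x (b 0))) :
    randersSlack a x (b 0) * (1 + fderiv ℝ P (funkPoint a x (b 0)) x) = 1 := by
  have hradial : fderiv ℝ P (funkPoint a x (b 0)) (funkPoint a x (b 0)) = 1 + ⟪a, b 0⟫ := by
    simpa [hP.apply_funkPoint hx, randersNorm_of_norm_eq_one (b.norm_eq_one 0)] using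
      (hP.posHomogeneous hx).fderiv_apply_self hy hd
  have htangent : fderiv ℝ P (funkPoint a x (b 0)) (shear a x (b 1)) = ⟪a, b 1⟫ := by
    refine fderiv_funkPoint_shear_eq b hd ?_
    simpa only [hP.apply_funkPoint hx, randersNorm_of_norm_eq_one (norm_circleCurve b _),
      circleVelocity_zero] using hasDerivAt_one_add_inner_circleCurve b a 0
  have hlin := congrArg (fderiv ℝ P (funkPoint a x (b 0)))
    (randersSlack_smul_eq_smul_funkPoint_add (a := a) (x := x) b)
  simp only [map_add, map_smul, smul_eq_mul, hradial, htangent] at hlin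
  rw [mul_add, hlin, randersSlack, real_inner_eq_add_of_orthonormalBasis b a x]
  ring

lemma flatMetric_funkPoint (hE : Module.finrank ℝ E = 2) (ha : ‖a‖ < 1) (hP : IsFunkAt a x P)
    (hx : randersNorm a x < 1) (hd : DifferentiableOn ℝ P {0}ᶜ) {e : E} (he : ‖e‖ = 1) :
    flatMetric x P (funkPoint a x e) = (1 + ⟪a, e⟫) / randersSlack a x e := by
  obtain ⟨b, rfl⟩ := exists_orthonormalBasis_zero_eq hE he
  have hy : funkPoint a x (b 0) ≠ 0 :=
    funkPoint_ne_zero ha hx (b.orthonormal.ne_zero 0)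
  have hfactor := hP.randersSlack_mul_one_add_fderiv hx b hy
    (hd.differentiableAt (isOpen_compl_singleton.mem_nhds hy))
  rw [flatMetric, hP.apply_funkPoint hx, randersNorm_of_norm_eq_one he,
    eq_one_div_of_mul_eq_one_right hfactor, mul_one_div]

lemma fderiv_fderiv_flatMetric_shear (hE : Module.finrank ℝ E = 2) (ha : ‖a‖ < 1)
    (hP : IsFunkAt a x P) (hx : randersNorm a x < 1) (hd : ContDiffOn ℝ 3 P {0}ᶜ)
    (b : OrthonormalBasis (Fin 2) ℝ E) :
    fderiv ℝ (fderiv ℝ (flatMetric x P)) (funkPoint a x (b 0)) (shear a x (b 1)) (shear a x (b 1))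
      = convexityForm a x b / randersSlack a x (b 0) ^ 3 := by
  have hy : funkPoint a x (b 0) ≠ 0 := funkPoint_ne_zero ha hx (b.orthonormal.ne_zero 0)
  have hslack (t : ℝ) : randersSlack a x (circleCurve b t) ≠ 0 :=
    (randersSlack_pos hx (norm_circleCurve b t)).ne'
  have hslack₀ : randersSlack a x (b 0) ≠ 0 := (randersSlack_pos hx (b.norm_eq_one 0)).ne'
  have hval {e : E} (he : ‖e‖ = 1) :=
    hP.flatMetric_funkPoint hE ha hx (hd.differentiableOn (by norm_num)) he
  have hfirst (t : ℝ) := hasDerivAt_div_randersSlack_circleCurve b (hslack t)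
  simp only [← hval (norm_circleCurve b _)] at hfirst
  have hhess := (hP.posHomogeneous_flatMetric hx).randersSlack_mul_fderiv_fderiv_shear b hy
    (contDiffAt_flatMetric (hd.contDiffAt (isOpen_compl_singleton.mem_nhds hy)))
    hfirst (hasDerivAt_deriv_div_randersSlack_circleCurve b (hslack 0))
  rw [hval (b.norm_eq_one 0), circleCurve_zero, circleVelocity_zero, real_inner_comm (b 0) x,
    real_inner_comm (b 1) x] at hhess
  rw [← mul_right_inj' hslack₀, hhess, convexityForm]
  field_simp
  ring

end IsFunkAt

/-- The number whose sign decides strong convexity of the flat metric over `x`; it is the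
coefficient of the remainder when the square is completed in `convexityForm a x`. -/
noncomputable def convexityDiscriminant (a x : E) : ℝ :=
  (2 + ⟪a, x⟫) ^ 2 - (9 * ‖a‖ ^ 2 - 8) * ‖x‖ ^ 2

/-- The completed square in `convexityForm a x` vanishes at the unit vectors `e` with
`⟪criticalVector a x, e⟫ = -2 * ‖x‖ ^ 2`. -/
noncomputable def criticalVector (a x : E) : E := (3 * ‖x‖ ^ 2) • a - (2 + ⟪a, x⟫) • x

lemma four_mul_norm_sq_mul_convexityForm (b : OrthonormalBasis (Fin 2) ℝ E) :
    4 * ‖x‖ ^ 2 * convexityForm a x b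
      = (2 * ‖x‖ ^ 2 + ⟪criticalVector a x, b 0⟫) ^ 2
        + convexityDiscriminant a x * ⟪b 1, x⟫ ^ 2 := by
  have hnorm (v : E) : ‖v‖ ^ 2 = ⟪v, b 0⟫ ^ 2 + ⟪v, b 1⟫ ^ 2 := by
    rw [← b.sum_sq_inner_left, Fin.sum_univ_two]
  rw [convexityForm, convexityDiscriminant, criticalVector, randersSlack, inner_sub_left,
    inner_smul_left, inner_smul_left, hnorm a, hnorm x,
    real_inner_eq_add_of_orthonormalBasis b a x, real_inner_comm x (b 0), real_inner_comm x (b 1)]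
  simp only [conj_trivial]
  ring

lemma convexityForm_pos (hx : randersNorm a x < 1) (hH : 0 < convexityDiscriminant a x)
    (b : OrthonormalBasis (Fin 2) ℝ E) : 0 < convexityForm a x b := by
  have hslack := randersSlack_pos hx (b.norm_eq_one 0)
  by_cases htangent : ⟪b 1, x⟫ = 0
  · simp only [convexityForm, htangent]
    nlinarith
  · have hx0 : x ≠ 0 := by rintro rfl; simp at htangent
    have hpos : 0 < 4 * ‖x‖ ^ 2 * convexityForm a x b := by
      rw [four_mul_norm_sq_mul_convexityForm]
      positivity
    exact pos_of_mul_pos_right hpos (by positivity)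

lemma two_mul_norm_sq_le_norm_criticalVector (ha : ‖a‖ < 1) (hx : randersNorm a x < 1)
    (hH : convexityDiscriminant a x ≤ 0) :
    2 * ‖x‖ ^ 2 ≤ ‖criticalVector a x‖ := by
  refine abs_le_of_sq_le_sq' ?_ (norm_nonneg _) |>.2
  have hcs : ⟪a, x⟫ ^ 2 ≤ ‖x‖ ^ 2 := by
    have h := abs_real_inner_le_norm a x
    rw [← sq_abs]
    gcongr
    exact h.trans (mul_le_of_le_one_left (norm_nonneg x) ha.le)
  have hinner : ⟪a, x⟫ < 1 := by
    rw [randersNorm] at hx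
    linarith [norm_nonneg x]
  have hexpand : ‖criticalVector a x‖ ^ 2 = (2 * ‖x‖ ^ 2) ^ 2
      + ‖x‖ ^ 2 * (4 * (‖x‖ ^ 2 - ⟪a, x⟫ ^ 2) + 4 * (2 - ⟪a, x⟫) - convexityDiscriminant a x) := by
    rw [criticalVector, norm_sub_sq_real, norm_smul, norm_smul, mul_pow, mul_pow, Real.norm_eq_abs,
      Real.norm_eq_abs, sq_abs, sq_abs, inner_smul_left, inner_smul_right, convexityDiscriminant]
    simp only [conj_trivial]
    ring
  rw [hexpand, le_add_iff_nonneg_right]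
  exact mul_nonneg (sq_nonneg _) (by linarith)

lemma exists_convexityForm_nonpos (hE : Module.finrank ℝ E = 2) (ha : ‖a‖ < 1)
    (hx : randersNorm a x < 1) (hH : convexityDiscriminant a x ≤ 0) :
    ∃ b : OrthonormalBasis (Fin 2) ℝ E, convexityForm a x b ≤ 0 := by
  have hx0 : x ≠ 0 := by
    rintro rfl
    norm_num [convexityDiscriminant] at hH
  have hrank : 1 < Module.rank ℝ E := Module.lt_rank_of_lt_finrank (by lia)
  obtain ⟨e, he, hsq⟩ := exists_norm_eq_one_inner_eq hrank (c := -(2 * ‖x‖ ^ 2))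
    (by simpa using two_mul_norm_sq_le_norm_criticalVector ha hx hH)
  obtain ⟨b, rfl⟩ := exists_orthonormalBasis_zero_eq hE he
  have hform := four_mul_norm_sq_mul_convexityForm (a := a) (x := x) b
  rw [hsq, add_neg_cancel, zero_pow two_ne_zero, zero_add] at hform
  refine ⟨b, nonpos_of_mul_nonpos_right ?_ (by positivity : 0 < 4 * ‖x‖ ^ 2)⟩
  rw [hform]
  exact mul_nonpos_of_nonpos_of_nonneg hH (sq_nonneg _)

lemma forall_convexityForm_pos_iff (hE : Module.finrank ℝ E = 2) (ha : ‖a‖ < 1)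
    (hx : randersNorm a x < 1) :
    (∀ b : OrthonormalBasis (Fin 2) ℝ E, 0 < convexityForm a x b) ↔
      0 < convexityDiscriminant a x := by
  refine ⟨fun h => ?_, convexityForm_pos hx⟩
  by_contra! hH
  obtain ⟨b, hb⟩ := exists_convexityForm_nonpos hE ha hx hH
  exact hb.not_gt (h b)

namespace IsFunkAt

variable {P : E → ℝ}

lemma forall_iteratedFDeriv_two_flatMetric_sq_pos_iff (hE : Module.finrank ℝ E = 2) (ha : ‖a‖ < 1)
    (hP : IsFunkAt a x P) (hx : randersNorm a x < 1) (hd : ContDiffOn ℝ 3 P {0}ᶜ)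
    (b : OrthonormalBasis (Fin 2) ℝ E) :
    (∀ θ : E, θ ≠ 0 →
      0 < iteratedFDeriv ℝ 2 (fun z => flatMetric x P z ^ 2) (funkPoint a x (b 0)) ![θ, θ]) ↔
      0 < convexityForm a x b := by
  have hslack := randersSlack_pos hx (b.norm_eq_one 0)
  have hindep := linearIndependent_funkPoint_shear b hslack.ne'
  have hdiff : ContDiffAt ℝ 2 (flatMetric x P) (funkPoint a x (b 0)) :=
    contDiffAt_flatMetric (hd.contDiffAt (isOpen_compl_singleton.mem_nhds (hindep.ne_zero 0)))
  have hpos : 0 < flatMetric x P (funkPoint a x (b 0)) := by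
    rw [hP.flatMetric_funkPoint hE ha hx (hd.differentiableOn (by norm_num)) (b.norm_eq_one 0),
      ← randersNorm_of_norm_eq_one (b.norm_eq_one 0)]
    exact div_pos (randersNorm_pos ha (b.orthonormal.ne_zero 0)) hslack
  rw [(hP.posHomogeneous_flatMetric hx).forall_iteratedFDeriv_two_sq_pos_iff hE hdiff hpos hindep,
    hP.fderiv_fderiv_flatMetric_shear hE ha hx hd, div_pos_iff_of_pos_right (pow_pos hslack 3)]

theorem isStronglyConvex_flatMetric_iff (hE : Module.finrank ℝ E = 2) (ha : ‖a‖ < 1)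
    (hP : IsFunkAt a x P) (hx : randersNorm a x < 1) (hd : ContDiffOn ℝ 3 P {0}ᶜ) :
    IsStronglyConvex (flatMetric x P) ↔ 0 < convexityDiscriminant a x := by
  rw [← forall_convexityForm_pos_iff hE ha hx]
  simp only [← hP.forall_iteratedFDeriv_two_flatMetric_sq_pos_iff hE ha hx hd]
  refine ⟨fun h b => h _ (funkPoint_ne_zero ha hx (b.orthonormal.ne_zero 0)), fun h y hy => ?_⟩
  obtain ⟨r, hr, e, he, rfl⟩ := hP.exists_smul_funkPoint_eq hy
  obtain ⟨b, rfl⟩ := exists_orthonormalBasis_zero_eq hE he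
  rw [(hP.posHomogeneous_flatMetric hx).iteratedFDeriv_two_sq_smul hr (right_ne_zero_of_smul hy)]
  exact h b

end IsFunkAt

theorem stmt_18_general (hE : Module.finrank ℝ E = 2) (ha : ‖a‖ < 1) {P F : E → E → ℝ}
    (hP : ∀ x, randersNorm a x < 1 → IsFunkAt a x (P x))
    (hPsmooth : ∀ x, randersNorm a x < 1 → ContDiffOn ℝ 3 (P x) {0}ᶜ)
    (hF : ∀ x, randersNorm a x < 1 → ∀ y, y ≠ 0 → F x y = flatMetric x (P x) y) :
    {x | randersNorm a x < 1 ∧ IsStronglyConvex (F x)}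
      = {x | randersNorm a x < 1 ∧ 0 < convexityDiscriminant a x} :=
  Set.ext fun x => and_congr_right fun hx => (isStronglyConvex_congr (hF x hx)).trans
    ((hP x hx).isStronglyConvex_flatMetric_iff hE ha hx (hPsmooth x hx))

lemma convexityDiscriminant_pos_of_lt (ha : 9 * ‖a‖ ^ 2 < 8) : 0 < convexityDiscriminant a x := by
  rw [convexityDiscriminant]
  rcases eq_or_ne x 0 with rfl | hx
  · norm_num
  · have hnorm := mul_pos (sub_pos.2 ha) (pow_pos (norm_pos_iff.2 hx) 2)
    linarith [sq_nonneg (2 + ⟪a, x⟫)]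

lemma convexityDiscriminant_pos_iff_of_eq (ha : 9 * ‖a‖ ^ 2 = 8) :
    0 < convexityDiscriminant a x ↔ ⟪a, x⟫ ≠ -2 := by
  rw [convexityDiscriminant, ha, sub_self, zero_mul, sub_zero, sq_pos_iff, ne_eq,
    ← neg_eq_iff_add_eq_zero, eq_comm]

end InnerProductSpace

section Coordinates

variable {a₁ : ℝ} {a : EuclideanSpace ℝ (Fin 2)}

lemma inner_eq_mul_of_coords (ha0 : a 0 = a₁) (ha1 : a 1 = 0) (x : EuclideanSpace ℝ (Fin 2)) :
    ⟪a, x⟫ = a₁ * x 0 := by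
  simp [PiLp.inner_apply, Fin.sum_univ_two, ha0, ha1, mul_comm]

lemma norm_sq_eq_of_coords (ha0 : a 0 = a₁) (ha1 : a 1 = 0) : ‖a‖ ^ 2 = a₁ ^ 2 := by
  simp [EuclideanSpace.norm_sq_eq, Fin.sum_univ_two, ha0, ha1]

lemma two_mul_sqrt_two_div_three_sq : (2 * Real.sqrt 2 / 3) ^ 2 = 8 / 9 := by
  rw [div_pow, mul_pow, Real.sq_sqrt zero_le_two]
  norm_num

lemma convexityDiscriminant_pos_of_lt_two_mul_sqrt_two_div_three (ha₁ : 0 ≤ a₁) (ha0 : a 0 = a₁)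
    (ha1 : a 1 = 0) (h : a₁ < 2 * Real.sqrt 2 / 3) (x : EuclideanSpace ℝ (Fin 2)) :
    0 < convexityDiscriminant a x := by
  have hsq : a₁ ^ 2 < 8 / 9 := by
    rw [← two_mul_sqrt_two_div_three_sq]
    gcongr
  refine convexityDiscriminant_pos_of_lt ?_
  rw [norm_sq_eq_of_coords ha0 ha1]
  linarith

lemma convexityDiscriminant_pos_iff_of_eq_two_mul_sqrt_two_div_three (ha0 : a 0 = a₁)
    (ha1 : a 1 = 0) (h : a₁ = 2 * Real.sqrt 2 / 3) (x : EuclideanSpace ℝ (Fin 2)) :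
    0 < convexityDiscriminant a x ↔ x 0 ≠ -(3 * Real.sqrt 2 / 2) := by
  have hnorm : 9 * ‖a‖ ^ 2 = 8 := by
    rw [norm_sq_eq_of_coords ha0 ha1, h, two_mul_sqrt_two_div_three_sq]
    norm_num
  have hne : 2 * Real.sqrt 2 / 3 ≠ 0 := by positivity
  have hvertex : -2 = 2 * Real.sqrt 2 / 3 * -(3 * Real.sqrt 2 / 2) := by
    linear_combination Real.mul_self_sqrt zero_le_two
  rw [convexityDiscriminant_pos_iff_of_eq hnorm, inner_eq_mul_of_coords ha0 ha1, h, hvertex,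
    ne_eq, mul_right_inj' hne]

lemma convexityDiscriminant_eq_of_coords (ha₁ : a₁ ^ 2 < 1) (ha0 : a 0 = a₁) (ha1 : a 1 = 0)
    (x : EuclideanSpace ℝ (Fin 2)) :
    convexityDiscriminant a x
      = 8 * (1 - a₁ ^ 2) * (x 0 + a₁ / (4 * (1 - a₁ ^ 2))) ^ 2 - (9 * a₁ ^ 2 - 8) * x 1 ^ 2
        - (9 * a₁ ^ 2 - 8) / (2 * (1 - a₁ ^ 2)) := by
  have hne : 1 - a₁ ^ 2 ≠ 0 := (sub_pos.2 ha₁).ne'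
  rw [convexityDiscriminant, inner_eq_mul_of_coords ha0 ha1, norm_sq_eq_of_coords ha0 ha1,
    EuclideanSpace.norm_sq_eq, Fin.sum_univ_two, Real.norm_eq_abs, Real.norm_eq_abs, sq_abs, sq_abs]
  field_simp
  ring

end Coordinates

/-- For the Randers norm `φ(y) = ‖y‖ + ⟨a,y⟩` with `a = (a₁, 0)`,
`a₁ ∈ [0,1)`, the Funk metric `P` of `Ω = {φ < 1}` and the associated projectively flat
metric of zero flag curvature `F(x,y) = P(x,y)·(1 + D_yP(x,y)(x))`, the set `𝒪` where
`F(x,·)` is a Minkowski norm is: all of `Ω` when `a₁ < 2√2/3`; `Ω` minus the vertical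
line `x₁ = −3√2/2` when `a₁ = 2√2/3`; and the part of `Ω` outside a hyperbola when
`2√2/3 < a₁ < 1`. -/
theorem stmt_18 (a₁ : ℝ) (ha₁ : 0 ≤ a₁) (ha₁' : a₁ < 1)
    (a : EuclideanSpace ℝ (Fin 2)) (ha0 : a 0 = a₁) (ha1 : a 1 = 0)
    -- `P` is the unique (smooth) Funk metric of `Ω = {x | ‖x‖ + ⟨a,x⟩ < 1}`
    (P : EuclideanSpace ℝ (Fin 2) → EuclideanSpace ℝ (Fin 2) → ℝ)
    (hP : ∀ x, ‖x‖ + ⟪a, x⟫ < 1 → ∀ y,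
      P x y = ‖y + P x y • x‖ + ⟪a, y + P x y • x⟫)
    (hPuniq : ∀ x, ‖x‖ + ⟪a, x⟫ < 1 → ∀ y, ∀ t : ℝ,
      t = ‖y + t • x‖ + ⟪a, y + t • x⟫ → t = P x y)
    (hPsmooth : ContDiffOn ℝ (⊤ : ℕ∞)
      (fun p : EuclideanSpace ℝ (Fin 2) × EuclideanSpace ℝ (Fin 2) => P p.1 p.2)
      ({x | ‖x‖ + ⟪a, x⟫ < 1} ×ˢ {y | y ≠ 0}))
    -- `F` is the associated metric
    (F : EuclideanSpace ℝ (Fin 2) → EuclideanSpace ℝ (Fin 2) → ℝ)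
    (hF : ∀ x, ‖x‖ + ⟪a, x⟫ < 1 → ∀ y : EuclideanSpace ℝ (Fin 2), y ≠ 0 →
      F x y = P x y * (1 + fderiv ℝ (fun z => P x z) y x))
    -- `O` is the set on which `F(x,·)` is a Minkowski norm
    (O : Set (EuclideanSpace ℝ (Fin 2)))
    (hO : O = {x | ‖x‖ + ⟪a, x⟫ < 1 ∧ ∀ y : EuclideanSpace ℝ (Fin 2), y ≠ 0 →
      ∀ θ : EuclideanSpace ℝ (Fin 2), θ ≠ 0 →
        0 < iteratedFDeriv ℝ 2 (fun z => F x z ^ 2) y ![θ, θ]}) :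
    -- (1)
    (a₁ < 2 * Real.sqrt 2 / 3 → O = {x | ‖x‖ + ⟪a, x⟫ < 1}) ∧
    -- (2)
    (a₁ = 2 * Real.sqrt 2 / 3 →
      O = {x | ‖x‖ + ⟪a, x⟫ < 1} \ {x : EuclideanSpace ℝ (Fin 2) | x 0 = -(3 * Real.sqrt 2 / 2)}) ∧
    -- (3)
    (2 * Real.sqrt 2 / 3 < a₁ →
      O = {x | ‖x‖ + ⟪a, x⟫ < 1} ∩
        {x : EuclideanSpace ℝ (Fin 2) |
          (9 * a₁ ^ 2 - 8) / (2 * (1 - a₁ ^ 2)) <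
            8 * (1 - a₁ ^ 2) * (x 0 + a₁ / (4 * (1 - a₁ ^ 2))) ^ 2 -
              (9 * a₁ ^ 2 - 8) * (x 1) ^ 2}) := by
  have hsq : a₁ ^ 2 < 1 := by nlinarith
  have hnorm : ‖a‖ < 1 := by
    rwa [← sq_lt_one_iff₀ (norm_nonneg a), norm_sq_eq_of_coords ha0 ha1]
  have hslice (x : EuclideanSpace ℝ (Fin 2)) (hx : ‖x‖ + ⟪a, x⟫ < 1) :
      ContDiffOn ℝ 3 (P x) {0}ᶜ :=
    (hPsmooth.comp (f := fun y => (x, y)) (by fun_prop) fun y hy => ⟨hx, hy⟩).of_le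
      (WithTop.coe_le_coe.2 le_top)
  have hO' : O = {x | ‖x‖ + ⟪a, x⟫ < 1 ∧ 0 < convexityDiscriminant a x} :=
    hO.trans (stmt_18_general (by simp) hnorm hP hslice hF)
  rw [hO']
  refine ⟨fun h => ?_, fun h => ?_, fun _ => ?_⟩
  · exact Set.ext fun x => and_iff_left
      (convexityDiscriminant_pos_of_lt_two_mul_sqrt_two_div_three ha₁ ha0 ha1 h x)
  · exact Set.ext fun x => and_congr_right fun _ =>
      convexityDiscriminant_pos_iff_of_eq_two_mul_sqrt_two_div_three ha0 ha1 h x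
  · simp only [convexityDiscriminant_eq_of_coords hsq ha0 ha1, sub_pos]
    rfl
end
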